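/- arXiv:2212.03119 — 2 statements merged into one kernel-verified Lean document; each statement's English description precedes it below -/
import Mathlib

section
/- Let O be a Hopf algebra over ℂ. For every n ≥ 0 one has Δ(F_n^♥ O) ⊆ Σ_{k=0}^{n} F_k^♥ O ⊗ F_{n−k}^♥ O (sum of subspaces of O ⊗ O, where for subspaces X, Y ⊆ O the symbol X ⊗ Y denotes the image of the canonical map X ⊗ Y → O ⊗ O). -/
/-!
Write `p = id - ηε` and `p_n = p^{⊗(n+1)} ∘ Δ^{(n+1)}`, so that `F_n = ker p_n`.

Coassociativity gives `(p_i ⊗ p_j) ∘ Δ ≅ p_{i+j+1}` (`heartMap_comul_factor`), and `p 1 = 0` makes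
`p_{n+1}` factor through `p_n` (`heartMap_succ_factor`), so that the `F_n` increase. Hence for
`x ∈ F_n` the element `Δ x` is killed by `p_i ⊗ p_j` whenever `i + j = n - 1`, and also by
`id ⊗ p_n` and `p_n ⊗ id`, because `id = p + ηε`. Setting `F_{-1} = 0`, this says that `Δ x` lies in
`F_i ⊗ O + O ⊗ F_{n-1-i}` for all `-1 ≤ i ≤ n`.

What remains is linear algebra over a field: for an increasing filtration, the intersection of
these subspaces is contained in `∑ F_k ⊗ F_{n-k}` (`mem_iSup_tensorSub`). This follows by induction
from the modular law and `(A ⊗ O) ∩ (O ⊗ B) = A ⊗ B`.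
-/

open TensorProduct

universe u

/-- Iterated tensor powers `O^{⊗(n+1)}`, as bundled `ℂ`-modules. -/
noncomputable def Tpow (O : Type u) [AddCommGroup O] [Module ℂ O] : ℕ → ModuleCat.{u} ℂ
  | 0 => ModuleCat.of ℂ O
  | (n + 1) => ModuleCat.of ℂ (O ⊗[ℂ] (Tpow O n))

/-- The projection `id_O − η∘ε`. -/
noncomputable def heartProj (O : Type u) [Ring O] [HopfAlgebra ℂ O] : O →ₗ[ℂ] O :=
  LinearMap.id - (Algebra.linearMap ℂ O).comp (Coalgebra.counit : O →ₗ[ℂ] ℂ)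

/-- The map `(id − η∘ε)^{⊗(n+1)} ∘ Δ^{(n+1)} : O → O^{⊗(n+1)}`. -/
noncomputable def heartMap (O : Type u) [Ring O] [HopfAlgebra ℂ O] :
    (n : ℕ) → (O →ₗ[ℂ] Tpow O n)
  | 0 => heartProj O
  | (n + 1) =>
      (TensorProduct.map (heartProj O) (heartMap O n)).comp
        (Coalgebra.comul : O →ₗ[ℂ] O ⊗[ℂ] O)

/-- The filtration `F_n^♥ O := Ker((id − η∘ε)^{⊗(n+1)} ∘ Δ^{(n+1)})`. -/
noncomputable def Fheart (O : Type u) [Ring O] [HopfAlgebra ℂ O] (n : ℕ) :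
    Submodule ℂ O :=
  LinearMap.ker (heartMap O n)

/-- For subspaces `X, Y ⊆ O`, the subspace `X ⊗ Y` of `O ⊗ O`, i.e. the image of the
canonical map `X ⊗ Y → O ⊗ O`. -/
noncomputable def tensorSub (O : Type u) [AddCommGroup O] [Module ℂ O]
    (X Y : Submodule ℂ O) : Submodule ℂ (O ⊗[ℂ] O) :=
  LinearMap.range (TensorProduct.map X.subtype Y.subtype)

section LinearAlgebra

variable {O : Type u} [AddCommGroup O] [Module ℂ O]

lemma tensorSub_mono {A A' B B' : Submodule ℂ O} (hA : A ≤ A') (hB : B ≤ B') :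
    tensorSub O A B ≤ tensorSub O A' B' := by
  rintro _ ⟨w, rfl⟩
  refine ⟨TensorProduct.map (Submodule.inclusion hA) (Submodule.inclusion hB) w, ?_⟩
  rw [← LinearMap.comp_apply, ← TensorProduct.map_comp]
  rfl

lemma tensorSub_bot_left (B : Submodule ℂ O) : tensorSub O ⊥ B = ⊥ := by
  have h : (⊥ : Submodule ℂ O).subtype = 0 := by
    ext ⟨x, hx⟩
    simpa using hx
  rw [tensorSub, h, TensorProduct.map_zero_left, LinearMap.range_zero]

lemma tensorSub_bot_right (A : Submodule ℂ O) : tensorSub O A ⊥ = ⊥ := by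
  have h : (⊥ : Submodule ℂ O).subtype = 0 := by
    ext ⟨x, hx⟩
    simpa using hx
  rw [tensorSub, h, TensorProduct.map_zero_right, LinearMap.range_zero]

lemma tensorSub_inf_le (A B : Submodule ℂ O) :
    tensorSub O A ⊤ ⊓ tensorSub O ⊤ B ≤ tensorSub O A B := by
  rintro y ⟨⟨w, rfl⟩, ⟨v, hv⟩⟩
  have h1 : TensorProduct.map A.subtype LinearMap.id
      (TensorProduct.map LinearMap.id (B.mkQ.comp (⊤ : Submodule ℂ O).subtype) w) = 0 := by
    have h2 := congrArg (TensorProduct.map LinearMap.id B.mkQ) hv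
    simp only [← LinearMap.comp_apply, ← TensorProduct.map_comp] at h2 ⊢
    have h3 : B.mkQ.comp B.subtype = 0 := by ext; simp
    rw [h3, TensorProduct.map_zero_right] at h2
    exact h2.symm
  have h4 : TensorProduct.map LinearMap.id (B.mkQ.comp (⊤ : Submodule ℂ O).subtype) w = 0 :=
    (map_eq_zero_iff _ (Module.Flat.rTensor_preserves_injective_linearMap (M := O ⧸ B)
      A.subtype A.injective_subtype)).1 h1
  have h5 : LinearMap.lTensor A B.mkQ
      (TensorProduct.map LinearMap.id (⊤ : Submodule ℂ O).subtype w) = 0 := by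
    rw [← h4, LinearMap.lTensor, ← LinearMap.comp_apply, ← TensorProduct.map_comp]
    rfl
  have hex : Function.Exact B.subtype B.mkQ := by
    rw [LinearMap.exact_iff]; simp
  obtain ⟨u, hu⟩ := (lTensor_exact A hex B.mkQ_surjective _).1 h5
  refine ⟨u, ?_⟩
  have h6 := congrArg (TensorProduct.map A.subtype LinearMap.id) hu
  rw [LinearMap.lTensor] at h6
  simp only [← LinearMap.comp_apply, ← TensorProduct.map_comp] at h6
  exact h6

lemma ker_map_le {V W : Type*} [AddCommGroup V] [Module ℂ V] [AddCommGroup W] [Module ℂ W]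
    (f : O →ₗ[ℂ] V) (g : O →ₗ[ℂ] W) :
    LinearMap.ker (TensorProduct.map f g) ≤
      tensorSub O (LinearMap.ker f) ⊤ ⊔ tensorSub O ⊤ (LinearMap.ker g) := by
  intro y hy
  -- The description of the kernel needs surjective maps, so both maps are corestricted.
  have h1 : TensorProduct.map (LinearMap.range f).subtype (LinearMap.range g).subtype
      (TensorProduct.map f.rangeRestrict g.rangeRestrict y) = 0 := by
    rw [← LinearMap.comp_apply, ← TensorProduct.map_comp]
    exact hy
  have h2 := (map_eq_zero_iff _ (TensorProduct.map_injective_of_flat_flat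
    (LinearMap.range f).subtype (LinearMap.range g).subtype
    (Submodule.injective_subtype _) (Submodule.injective_subtype _))).1 h1
  have hf : Function.Exact (LinearMap.ker f).subtype f.rangeRestrict := by
    rw [LinearMap.exact_iff]; simp
  have hg : Function.Exact (LinearMap.ker g).subtype g.rangeRestrict := by
    rw [LinearMap.exact_iff]; simp
  have h3 : y ∈ LinearMap.ker (TensorProduct.map f.rangeRestrict g.rangeRestrict) := h2
  rw [TensorProduct.map_ker hf f.surjective_rangeRestrict hg g.surjective_rangeRestrict,
    sup_comm] at h3
  have e : ∀ C : Submodule ℂ O, ∀ z : O ⊗[ℂ] C,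
      LinearMap.lTensor O C.subtype z ∈ tensorSub O ⊤ C := fun C z =>
    ⟨TensorProduct.map (Submodule.topEquiv.symm : O ≃ₗ[ℂ] _).toLinearMap LinearMap.id z, by
      rw [← LinearMap.comp_apply, ← TensorProduct.map_comp]; rfl⟩
  have e' : ∀ C : Submodule ℂ O, ∀ z : C ⊗[ℂ] O,
      LinearMap.rTensor O C.subtype z ∈ tensorSub O C ⊤ := fun C z =>
    ⟨TensorProduct.map LinearMap.id (Submodule.topEquiv.symm : O ≃ₗ[ℂ] _).toLinearMap z, by
      rw [← LinearMap.comp_apply, ← TensorProduct.map_comp]; rfl⟩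
  refine SetLike.le_def.1 (sup_le_sup ?_ ?_) h3
  · rintro _ ⟨z, rfl⟩
    exact e' _ z
  · rintro _ ⟨z, rfl⟩
    exact e _ z

/-- For an increasing filtration `A` starting at `0`, the intersection of the subspaces
`A_i ⊗ O + O ⊗ A_j` over `i + j = n + 1` is contained in `∑ A_{k+1} ⊗ A_{n-k+1}`. -/
lemma mem_iSup_tensorSub (A : ℕ → Submodule ℂ O) (h0 : A 0 = ⊥) (hA : Monotone A) (n : ℕ)
    (y : O ⊗[ℂ] O)
    (hy : ∀ i j, i + j = n + 1 → y ∈ tensorSub O (A i) ⊤ ⊔ tensorSub O ⊤ (A j)) :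
    y ∈ ⨆ k : Fin (n + 1), tensorSub O (A (k + 1)) (A (n - (k : ℕ) + 1)) := by
  set S := ⨆ k : Fin (n + 1), tensorSub O (A (k + 1)) (A (n - (k : ℕ) + 1)) with hS
  -- Only the part of the sum with `k < m` is contained in `A m ⊗ O`, which the modular law needs.
  have key : ∀ m j, m + j = n + 1 →
      y ∈ (S ⊓ tensorSub O (A m) ⊤) ⊔ tensorSub O ⊤ (A j) := by
    intro m
    induction m with
    | zero =>
      intro j hj
      have := hy 0 j hj
      rw [h0, tensorSub_bot_left, bot_sup_eq] at this
      exact Submodule.mem_sup_right this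
    | succ m ih =>
      intro j hj
      obtain ⟨s, ⟨hsS, hsm⟩, t, ht, rfl⟩ := Submodule.mem_sup.1 (ih (j + 1) (by omega))
      have hs' : s ∈ tensorSub O (A (m + 1)) ⊤ :=
        tensorSub_mono (hA (Nat.le_succ m)) le_rfl hsm
      obtain ⟨a, ha, b, hb, hab⟩ := Submodule.mem_sup.1 (hy (m + 1) j hj)
      have hb' : b ∈ tensorSub O ⊤ (A (j + 1)) :=
        tensorSub_mono le_rfl (hA (Nat.le_succ j)) hb
      have hc : a - s = t - b := by
        rw [sub_eq_sub_iff_add_eq_add, hab, add_comm]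
      have hmem : a - s ∈ tensorSub O (A (m + 1)) (A (j + 1)) :=
        tensorSub_inf_le _ _ ⟨sub_mem ha hs', hc ▸ sub_mem ht hb'⟩
      have hle : tensorSub O (A (m + 1)) (A (j + 1)) ≤ S := by
        have := le_iSup (fun k : Fin (n + 1) =>
          tensorSub O (A (k + 1)) (A (n - (k : ℕ) + 1))) ⟨m, by omega⟩
        have hj' : n - m = j := by omega
        simpa only [hj'] using this
      refine Submodule.mem_sup.2 ⟨a, ⟨?_, ha⟩, b, hb, hab⟩
      simpa using add_mem (hle hmem) hsS
  have := key (n + 1) 0 rfl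
  rw [h0, tensorSub_bot_right, sup_bot_eq] at this
  exact this.1

lemma map_comp_right_comp {V W : Type*} [AddCommGroup V] [Module ℂ V] [AddCommGroup W]
    [Module ℂ W] (p : O →ₗ[ℂ] O) (q : O →ₗ[ℂ] V) (φ : V →ₗ[ℂ] W) (D : O →ₗ[ℂ] O ⊗[ℂ] O) :
    (TensorProduct.map p (φ.comp q)).comp D =
      (TensorProduct.map (LinearMap.id : O →ₗ[ℂ] O) φ).comp ((TensorProduct.map p q).comp D) := by
  rw [← LinearMap.comp_assoc, ← TensorProduct.map_comp, LinearMap.id_comp]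

end LinearAlgebra

section Heart

variable (O : Type u) [Ring O] [HopfAlgebra ℂ O]

lemma heartProj_one : heartProj O 1 = 0 := by
  simp [heartProj]

/-- `p_{n+1}` factors through `p_n`; for `n = 0` because `(p ⊗ p) ∘ Δ` kills the unit. -/
lemma heartMap_succ_factor (n : ℕ) :
    ∃ φ : Tpow O n →ₗ[ℂ] Tpow O (n + 1), heartMap O (n + 1) = φ.comp (heartMap O n) := by
  induction n with
  | zero =>
    refine ⟨heartMap O 1, ?_⟩
    ext x
    have h : heartMap O 1 (1 : O) = 0 := by
      change TensorProduct.map (heartProj O) (heartProj O) (Coalgebra.comul (1 : O)) = 0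
      rw [Bialgebra.comul_one, Algebra.TensorProduct.one_def, TensorProduct.map_tmul,
        heartProj_one, TensorProduct.zero_tmul]
    change heartMap O 1 x = heartMap O 1 (x - algebraMap ℂ O (Coalgebra.counit x))
    rw [map_sub, Algebra.algebraMap_eq_smul_one, map_smul, h, smul_zero, sub_zero]
  | succ n ih =>
    obtain ⟨φ, hφ⟩ := ih
    refine ⟨TensorProduct.map (LinearMap.id : O →ₗ[ℂ] O) φ, ?_⟩
    exact (congrArg (fun q => (TensorProduct.map (heartProj O) q).comp
        (Coalgebra.comul : O →ₗ[ℂ] O ⊗[ℂ] O)) hφ).trans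
      (map_comp_right_comp (heartProj O) (heartMap O n) φ Coalgebra.comul)

/-- `(p_i ⊗ p_j) ∘ Δ` agrees with `p_{i+j+1}` up to reassociating tensor factors. Only the
factorization is recorded, since that is what kernels depend on. -/
lemma heartMap_comul_factor (i j : ℕ) : ∀ m, m = i + j + 1 →
    ∃ φ : Tpow O m →ₗ[ℂ] (Tpow O i ⊗[ℂ] Tpow O j),
      (TensorProduct.map (heartMap O i) (heartMap O j)).comp
        (Coalgebra.comul : O →ₗ[ℂ] O ⊗[ℂ] O) = φ.comp (heartMap O m) := by
  induction i with
  | zero =>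
    intro m hm
    obtain rfl : m = j + 1 := by omega
    exact ⟨LinearMap.id, rfl⟩
  | succ i ih =>
    intro m hm
    obtain ⟨m, rfl⟩ : ∃ k, m = k + 1 := ⟨i + j + 1, by omega⟩
    obtain ⟨φ, hφ⟩ := ih m (by omega)
    refine ⟨(TensorProduct.assoc ℂ O (Tpow O i) (Tpow O j)).symm.toLinearMap.comp
      (TensorProduct.map (LinearMap.id : O →ₗ[ℂ] O) φ), ?_⟩
    have h1 : (TensorProduct.map (LinearMap.id : O →ₗ[ℂ] O) φ).comp (heartMap O (m + 1)) =
        (TensorProduct.map (heartProj O)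
          ((TensorProduct.map (heartMap O i) (heartMap O j)).comp
            (Coalgebra.comul : O →ₗ[ℂ] O ⊗[ℂ] O))).comp Coalgebra.comul := by
      rw [hφ]
      exact (map_comp_right_comp (heartProj O) (heartMap O m) φ Coalgebra.comul).symm
    refine Eq.trans ?_ (congrArg (fun f =>
      (TensorProduct.assoc ℂ O (Tpow O i) (Tpow O j)).symm.toLinearMap.comp f) h1.symm)
    ext x
    have hco := Coalgebra.coassoc_symm_apply (R := ℂ) x
    simp only [LinearMap.comp_apply]
    have h2 : ∀ z : O ⊗[ℂ] O, TensorProduct.map (heartProj O)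
          ((TensorProduct.map (heartMap O i) (heartMap O j)).comp
            (Coalgebra.comul : O →ₗ[ℂ] O ⊗[ℂ] O)) z =
        TensorProduct.map (heartProj O) (TensorProduct.map (heartMap O i) (heartMap O j))
          (LinearMap.lTensor O Coalgebra.comul z) := fun z => by
      rw [LinearMap.lTensor, ← LinearMap.comp_apply, ← TensorProduct.map_comp,
        LinearMap.comp_id]
    have h3 : ∀ z : O ⊗[ℂ] O, TensorProduct.map (heartMap O (i + 1)) (heartMap O j) z =
        TensorProduct.map (TensorProduct.map (heartProj O) (heartMap O i)) (heartMap O j)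
          (LinearMap.rTensor O Coalgebra.comul z) := fun z => by
      rw [LinearMap.rTensor, ← LinearMap.comp_apply, ← TensorProduct.map_comp,
        LinearMap.comp_id]
      rfl
    have h4 : ∀ z : O ⊗[ℂ] (O ⊗[ℂ] O),
        TensorProduct.map (TensorProduct.map (heartProj O) (heartMap O i)) (heartMap O j)
          ((TensorProduct.assoc ℂ O O O).symm z) =
        (TensorProduct.assoc ℂ O (Tpow O i) (Tpow O j)).symm
          (TensorProduct.map (heartProj O)
            (TensorProduct.map (heartMap O i) (heartMap O j)) z) := fun z => by
      rw [TensorProduct.map_map_assoc_symm]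
    refine (h3 _).trans ?_
    rw [← hco]
    refine (h4 _).trans ?_
    exact congrArg _ (h2 _).symm

lemma Fheart_mono : Monotone (Fheart O) := by
  refine monotone_nat_of_le_succ fun n x hx => ?_
  obtain ⟨φ, hφ⟩ := heartMap_succ_factor O n
  have hx' : heartMap O n x = 0 := hx
  change heartMap O (n + 1) x = 0
  rw [hφ, LinearMap.comp_apply, hx', map_zero]

lemma heartMap_tensor_comul_eq_zero {n i j : ℕ} (h : n ≤ i + j + 1) {x : O}
    (hx : x ∈ Fheart O n) :
    TensorProduct.map (heartMap O i) (heartMap O j) (Coalgebra.comul x) = 0 := by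
  obtain ⟨φ, hφ⟩ := heartMap_comul_factor O i j _ rfl
  have hx' : heartMap O (i + j + 1) x = 0 := Fheart_mono O h hx
  rw [← LinearMap.comp_apply, hφ, LinearMap.comp_apply, hx', map_zero]

lemma id_eq_heartProj_add : (LinearMap.id : O →ₗ[ℂ] O) =
    heartProj O + (Algebra.linearMap ℂ O).comp (Coalgebra.counit : O →ₗ[ℂ] ℂ) := by
  simp [heartProj]

lemma id_tensor_heartMap_comul {n : ℕ} {x : O} (hx : x ∈ Fheart O n) :
    TensorProduct.map (LinearMap.id : O →ₗ[ℂ] O) (heartMap O n) (Coalgebra.comul x) = 0 := by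
  have hx' : heartMap O n x = 0 := hx
  have h1 : TensorProduct.map (heartProj O) (heartMap O n) (Coalgebra.comul x) = 0 :=
    heartMap_tensor_comul_eq_zero O (i := 0) (by omega) hx
  rw [id_eq_heartProj_add, TensorProduct.map_add_left, LinearMap.add_apply, h1, zero_add]
  have h2 := congrArg (TensorProduct.map (Algebra.linearMap ℂ O) (heartMap O n))
    (Coalgebra.rTensor_counit_comul (R := ℂ) x)
  rw [LinearMap.rTensor, ← LinearMap.comp_apply, ← TensorProduct.map_comp,
    TensorProduct.map_tmul, hx', TensorProduct.tmul_zero, LinearMap.comp_id] at h2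
  exact h2

lemma heartMap_tensor_id_comul {n : ℕ} {x : O} (hx : x ∈ Fheart O n) :
    TensorProduct.map (heartMap O n) (LinearMap.id : O →ₗ[ℂ] O) (Coalgebra.comul x) = 0 := by
  have hx' : heartMap O n x = 0 := hx
  have h1 : TensorProduct.map (heartMap O n) (heartProj O) (Coalgebra.comul x) = 0 :=
    heartMap_tensor_comul_eq_zero O (j := 0) (by omega) hx
  rw [id_eq_heartProj_add, TensorProduct.map_add_right, LinearMap.add_apply, h1, zero_add]
  have h2 := congrArg (TensorProduct.map (heartMap O n) (Algebra.linearMap ℂ O))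
    (Coalgebra.lTensor_counit_comul (R := ℂ) x)
  rw [LinearMap.lTensor, ← LinearMap.comp_apply, ← TensorProduct.map_comp,
    TensorProduct.map_tmul, hx', TensorProduct.zero_tmul, LinearMap.comp_id] at h2
  exact h2

/-- The filtration `F^♥` with index shifted by one, so that it starts at `F_{-1}^♥ O = 0`. -/
noncomputable def FheartShift : ℕ → Submodule ℂ O
  | 0 => ⊥
  | n + 1 => Fheart O n

lemma FheartShift_mono : Monotone (FheartShift O) := by
  refine monotone_nat_of_le_succ fun n => ?_
  cases n with
  | zero => exact bot_le
  | succ n => exact Fheart_mono O (Nat.le_succ n)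

end Heart

/-- `Δ(F_n^♥ O) ⊆ Σ_{k=0}^{n} F_k^♥ O ⊗ F_{n−k}^♥ O`. -/
theorem stmt11 (O : Type u) [Ring O] [HopfAlgebra ℂ O] (n : ℕ) :
    Submodule.map (Coalgebra.comul : O →ₗ[ℂ] O ⊗[ℂ] O) (Fheart O n) ≤
      ⨆ k : Fin (n + 1), tensorSub O (Fheart O k) (Fheart O (n - (k : ℕ))) := by
  rintro _ ⟨x, hx, rfl⟩
  refine mem_iSup_tensorSub (FheartShift O) rfl (FheartShift_mono O) n _ fun i j hij => ?_
  rcases i with _ | i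
  · obtain rfl : j = n + 1 := by omega
    have := ker_map_le _ _ (LinearMap.mem_ker.2 (id_tensor_heartMap_comul O hx))
    rwa [LinearMap.ker_id] at this
  rcases j with _ | j
  · obtain rfl : i = n := by omega
    have := ker_map_le _ _ (LinearMap.mem_ker.2 (heartMap_tensor_id_comul O hx))
    rwa [LinearMap.ker_id] at this
  · exact ker_map_le _ _
      (LinearMap.mem_ker.2 (heartMap_tensor_comul_eq_zero O (by omega) hx))
end

section
/- Let (B, H) be a Hopf algebra with module algebra (HAMA). Then F_• B is an algebra filtration of B: F_n B ⊆ F_{n+1} B for all n ≥ 0, and (F_n B)·(F_m B) ⊆ F_{n+m} B for all n, m ≥ 0, where (F_n B)·(F_m B) denotes the ℂ-span of products b b' with b ∈ F_n B, b' ∈ F_m B. -/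
/-!
Write `G_n` for the elements of `B` killed by `J ^ n`, so that `F_n B = G_{n+1}` and `G_0 = 0`.
The inclusion `F_n B ⊆ F_{n+1} B` holds because `J` is an ideal. The product statement becomes
`G_i G_j ⊆ G_{i+j-1}` for `i + j ≥ 1`, proved in `Killed.mul` by induction on `i + j`. Since
`J ^ (k+1) = J * J ^ k`, an element lies in `G_{k+1}` as soon as `J` maps it into `G_k`. For
`x ∈ J`, counitality gives `Δ x ∈ J ⊗ H + H ⊗ J`, more precisely `Δ x ∈ J ⊗ H + 1 ⊗ J`, so
`(b b')·x` is a sum of terms `(b·y)(b'·h)` and `b (b'·y)` with `y ∈ J`. As `J` maps `G_{i+1}` into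
`G_i` and `H` preserves every `G_j`, the induction hypothesis applies to each term.
-/

open TensorProduct

universe u v

/-- The augmentation ideal `J_H = Ker(ε_H)` of a Hopf algebra, as a `ℂ`-submodule. -/
noncomputable def Jaug (H : Type u) [Ring H] [HopfAlgebra ℂ H] : Submodule ℂ H :=
  LinearMap.ker (Coalgebra.counit : H →ₗ[ℂ] ℂ)

/-- For a right action `act` of a Hopf algebra `H` on an algebra `B`,
`F_n B = {b ∈ B : b·x = 0 for all x ∈ F^{n+1} H = J_H^{n+1}}`. -/
noncomputable def FB (H : Type u) (B : Type v) [Ring H] [HopfAlgebra ℂ H]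
    [Ring B] [Algebra ℂ B] (act : B →ₗ[ℂ] H →ₗ[ℂ] B) (n : ℕ) : Submodule ℂ B :=
  ⨅ x ∈ (Jaug H) ^ (n + 1), LinearMap.ker (act.flip x)

/-- `b` is annihilated by `J_H ^ n`. This is `b ∈ F_{n-1} B`, shifted so that the index `0`
stands for `F_{-1} B = 0`. -/
def Killed {H : Type u} {B : Type v} [Ring H] [HopfAlgebra ℂ H] [Ring B] [Algebra ℂ B]
    (act : B →ₗ[ℂ] H →ₗ[ℂ] B) (n : ℕ) (b : B) : Prop :=
  ∀ x ∈ Jaug H ^ n, act b x = 0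

section

variable {H : Type u} {B : Type v} [Ring H] [HopfAlgebra ℂ H] [Ring B] [Algebra ℂ B]
  {act : B →ₗ[ℂ] H →ₗ[ℂ] B}

theorem mem_FB_iff {n : ℕ} {b : B} : b ∈ FB H B act n ↔ Killed act (n + 1) b := by
  simp [FB, Killed, Submodule.mem_iInf]

theorem mem_Jaug {x : H} : x ∈ Jaug H ↔ Coalgebra.counit (R := ℂ) x = 0 := Iff.rfl

theorem sub_counit_mem_Jaug (h : H) :
    h - Coalgebra.counit (R := ℂ) h • (1 : H) ∈ Jaug H := by
  simp [mem_Jaug]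

theorem mul_mem_Jaug_pow_succ (h : H) {n : ℕ} {x : H} (hx : x ∈ Jaug H ^ (n + 1)) :
    h * x ∈ Jaug H ^ (n + 1) := by
  rw [pow_succ'] at hx ⊢
  induction hx using Submodule.mul_induction_on' with
  | mem_mul_mem y hy z hz =>
    rw [← mul_assoc]
    refine Submodule.mul_mem_mul ?_ hz
    rw [mem_Jaug] at hy ⊢
    simp [hy]
  | add y _ z _ ihy ihz => rw [mul_add]; exact add_mem ihy ihz

theorem Jaug_pow_le (n : ℕ) : Jaug H ^ (n + 1 + 1) ≤ Jaug H ^ (n + 1) := by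
  rw [pow_succ' _ (n + 1)]
  exact Submodule.mul_le.2 fun y _ z hz => mul_mem_Jaug_pow_succ y hz

theorem Killed.eq_zero (hone : ∀ b : B, act b 1 = b) {b : B} (hb : Killed act 0 b) : b = 0 := by
  rw [← hone b]
  exact hb 1 (by rw [pow_zero]; exact Submodule.one_le.1 le_rfl)

theorem Killed.act_Jaug (hact : ∀ (b : B) (h h' : H), act (act b h) h' = act b (h * h'))
    {n : ℕ} {b : B} (hb : Killed act (n + 1) b) {x : H} (hx : x ∈ Jaug H) :
    Killed act n (act b x) := fun y hy => by
  rw [hact]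
  exact hb _ (by rw [pow_succ']; exact Submodule.mul_mem_mul hx hy)

theorem Killed.act_any (hact : ∀ (b : B) (h h' : H), act (act b h) h' = act b (h * h'))
    (hone : ∀ b : B, act b 1 = b)
    {n : ℕ} {b : B} (hb : Killed act n b) (h : H) : Killed act n (act b h) := by
  intro y hy
  cases n with
  | zero => simp [hb.eq_zero hone]
  | succ n =>
    rw [hact]
    exact hb _ (mul_mem_Jaug_pow_succ h hy)

theorem Killed.of_act_Jaug (hact : ∀ (b : B) (h h' : H), act (act b h) h' = act b (h * h'))
    {n : ℕ} {b : B} (hb : ∀ x ∈ Jaug H, Killed act n (act b x)) : Killed act (n + 1) b := by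
  intro x hx
  rw [pow_succ'] at hx
  induction hx using Submodule.mul_induction_on' with
  | mem_mul_mem y hy z hz => rw [← hact]; exact hb y hy z hz
  | add y _ z _ ihy ihz => rw [map_add, ihy, ihz, add_zero]

/-- The submodule form of `Killed`. -/
def killedSubmodule (act : B →ₗ[ℂ] H →ₗ[ℂ] B) (n : ℕ) : Submodule ℂ B where
  carrier := {b | Killed act n b}
  add_mem' ha hb x hx := by simp [ha x hx, hb x hx]
  zero_mem' x _ := by simp
  smul_mem' c b hb x hx := by simp [hb x hx]

/-- Modulo `J ⊗ H + H ⊗ J`, every tensor `t` is the scalar `(ε ⊗ ε)(t)` times `1 ⊗ 1`; this is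
that congruence, pushed forward to `B` by `h ⊗ k ↦ (b·h)(b'·k)`. -/
theorem mul_map_sub_mem (hone : ∀ b : B, act b 1 = b) (P : Submodule ℂ B) (b b' : B)
    (h₁ : ∀ x ∈ Jaug H, ∀ k, act b x * act b' k ∈ P)
    (h₂ : ∀ x ∈ Jaug H, b * act b' x ∈ P) (t : H ⊗[ℂ] H) :
    LinearMap.mul' ℂ B (TensorProduct.map (act b) (act b') t) -
      Coalgebra.counit (R := ℂ) (TensorProduct.lid ℂ H
        ((Coalgebra.counit (R := ℂ) (A := H)).rTensor H t)) • (b * b') ∈ P := by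
  induction t with
  | zero => simp
  | add s t hs ht =>
    simp only [map_add, add_smul]
    rw [add_sub_add_comm]
    exact add_mem hs ht
  | tmul h k =>
    have e₁ := h₁ _ (sub_counit_mem_Jaug h) k
    have e₂ := P.smul_mem (Coalgebra.counit (R := ℂ) h) (h₂ _ (sub_counit_mem_Jaug k))
    convert add_mem e₁ e₂ using 1
    simp [hone, sub_mul, mul_sub, smul_sub, smul_smul]

/-- The filtration property `G_i G_j ⊆ G_k` with `i + j = k + 1`, where `G_n` is the set of elements
killed by `J ^ n`. -/
theorem Killed.mul (hact : ∀ (b : B) (h h' : H), act (act b h) h' = act b (h * h'))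
    (hone : ∀ b : B, act b 1 = b)
    (hmeas : ∀ (b b' : B) (h : H), act (b * b') h =
      LinearMap.mul' ℂ B (TensorProduct.map (act b) (act b')
        ((Coalgebra.comul : H →ₗ[ℂ] H ⊗[ℂ] H) h))) (k : ℕ) :
    ∀ (i j : ℕ), i + j = k + 1 → ∀ b b' : B, Killed act i b → Killed act j b' →
      Killed act k (b * b') := by
  induction k with
  | zero =>
    intro i j hij b b' hb hb'
    obtain rfl | rfl : i = 0 ∨ j = 0 := by omega
    · intro x _; simp [hb.eq_zero hone]
    · intro x _; simp [hb'.eq_zero hone]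
  | succ k ih =>
    intro i j hij b b' hb hb'
    refine Killed.of_act_Jaug hact fun x hx => ?_
    have key := mul_map_sub_mem hone (killedSubmodule act k) b b' ?_ ?_
      (Coalgebra.comul (R := ℂ) x)
    · -- Counitality makes the scalar `ε x`, which vanishes on `J`.
      rw [Coalgebra.rTensor_counit_comul, TensorProduct.lid_tmul, one_smul, mem_Jaug.1 hx,
        zero_smul, sub_zero, ← hmeas] at key
      exact key
    · intro y hy h
      cases i with
      | zero => rw [hb.eq_zero hone]; simp
      | succ i => exact ih i j (by omega) _ _ (hb.act_Jaug hact hy) (hb'.act_any hact hone h)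
    · intro y hy
      cases j with
      | zero => rw [hb'.eq_zero hone]; simp
      | succ j => exact ih i j (by omega) _ _ hb (hb'.act_Jaug hact hy)

end

/-- For a Hopf algebra with module algebra `(B, H)`, the family `F_• B` is an algebra
filtration of `B`. -/
theorem stmt18 (H : Type u) (B : Type v) [Ring H] [HopfAlgebra ℂ H]
    [Ring B] [Algebra ℂ B]
    (act : B →ₗ[ℂ] H →ₗ[ℂ] B)
    -- right module axioms
    (hact : ∀ (b : B) (h h' : H), act (act b h) h' = act b (h * h'))
    (hone : ∀ b : B, act b 1 = b)
    -- measuring axiom: (b b')·h = Σ (b·h⁽¹⁾)(b'·h⁽²⁾)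
    (hmeas : ∀ (b b' : B) (h : H), act (b * b') h =
      LinearMap.mul' ℂ B (TensorProduct.map (act b) (act b')
        ((Coalgebra.comul : H →ₗ[ℂ] H ⊗[ℂ] H) h))) :
    (∀ n : ℕ, FB H B act n ≤ FB H B act (n + 1)) ∧
    (∀ n m : ℕ, FB H B act n * FB H B act m ≤ FB H B act (n + m)) := by
  refine ⟨fun n b hb => ?_, fun n m => Submodule.mul_le.2 fun b hb b' hb' => ?_⟩
  · rw [mem_FB_iff] at hb ⊢
    exact fun x hx => hb x (Jaug_pow_le n hx)
  · rw [mem_FB_iff] at hb hb' ⊢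
    exact Killed.mul hact hone hmeas (n + m + 1) (n + 1) (m + 1) (by omega) b b' hb hb'
end
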